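/- Let F : E → B be a row-finite Kumjian-Pask fibration. If F is aperiodic, then the groupoid G_F is topologically principal: the set of units x ∈ F^∞ whose isotropy group xG_Fx = {[μ,ν,x] ∈ G_F : s([μ,ν,x]) = r([μ,ν,x]) = x} is trivial (consists only of the unit [r(x),r(x),x]) is dense in F^∞. -/

import Mathlib

/-!
An infinite path `x` to `X` is determined by the set of morphisms `μ` to `X` with `x ∈ Z(μ)`. For
a discrete Conduché fibration the induced slice functors are discrete opfibrations, so the sets
that arise in this way are exactly those with one element above each morphism of `B` to `F X` that
are closed under `γ ≫ μ ↦ μ` (`mem_of_comp`, `mem_unique`, `exists_path`). In these terms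
`res_μ x = {γ | γ ≫ μ ∈ x}`, and `ind_β y` consists of the `φ` with `δ ≫ φ = γ ≫ β` for some
`γ ∈ y`; that this is again an infinite path is where the strong Ore condition enters
(`exists_ind`).

By the Ore condition two morphisms of a path have a common extension in the path (`mem_common`), so
every nonempty open set contains some `Z(β)` (`exists_ZMor_subset`). Take an aperiodic path `y` to
the source of `β` and put `x = ind_β y ∈ Z(β)`. Suppose `[μ, ν, x]` is an isotropy element, so that
`res_μ x = res_ν x = w`. Extending along `β` gives `κ ∈ w` with `κ ≫ μ = α ≫ β` and
`κ ≫ ν = α' ≫ β` for some `α, α' ∈ y`. Then `res_α y = res_κ w = res_α' y`, so `α = α'` by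
aperiodicity and `κ ≫ μ = κ ≫ ν` (`exists_equalizer`). Hence `ind_μ ∘ res_ν` is the identity on
`Z(κ ≫ ν)` (`translates_iff`), and `[μ, ν, x]` is a unit.
-/

open CategoryTheory

universe v u v' u' v'' u''

namespace DCFpaper

variable {E : Type u} [Category.{v} E] {B : Type u'} [Category.{v'} B]

/-- Equality of morphisms with possibly different (but equal) endpoints. -/
def MorEq {C : Type u''} [Category.{v''} C] {W X Y Z : C} (f : W ⟶ X) (g : Y ⟶ Z) : Prop :=
  ∃ (h₁ : W = Y) (h₂ : X = Z), f = eqToHom h₁ ≫ g ≫ eqToHom h₂.symm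

/-- A lift of a factorization `F φ = l ≫ ρ` to a factorization of `φ`. -/
structure ConducheLift (F : E ⥤ B) {Y X : E} (φ : Y ⟶ X) {M : B}
    (l : F.obj Y ⟶ M) (ρ : M ⟶ F.obj X) where
  mid : E
  lam : Y ⟶ mid
  rho : mid ⟶ X
  comp_eq : lam ≫ rho = φ
  obj_eq : F.obj mid = M
  map_lam : F.map lam = l ≫ eqToHom obj_eq.symm
  map_rho : F.map rho = eqToHom obj_eq ≫ ρ

/-- Discrete Conduché fibration: unique factorization lifting. -/
def IsDCF (F : E ⥤ B) : Prop :=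
  ∀ {Y X : E} (φ : Y ⟶ X) {M : B} (l : F.obj Y ⟶ M) (ρ : M ⟶ F.obj X),
    F.map φ = l ≫ ρ →
      Nonempty (ConducheLift F φ l ρ) ∧ ∀ L L' : ConducheLift F φ l ρ, L = L'

/-- Right Ore condition: every cospan can be completed to a commutative square. -/
def RightOre (C : Type u'') [Category.{v''} C] : Prop :=
  ∀ {A X D : C} (m : A ⟶ D) (n : X ⟶ D),
    ∃ (P : C) (p : P ⟶ A) (q : P ⟶ X), p ≫ m = q ≫ n

/-- Strongly right Ore. -/
def StronglyRightOre (C : Type u'') [Category.{v''} C] : Prop :=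
  RightOre C ∧
    ∀ {A X D Z₁ Z₂ : C} (m : A ⟶ D) (n : X ⟶ D)
      (p₁ : Z₁ ⟶ A) (q₁ : Z₁ ⟶ X) (p₂ : Z₂ ⟶ A) (q₂ : Z₂ ⟶ X),
      p₁ ≫ m = q₁ ≫ n → p₂ ≫ m = q₂ ≫ n →
        ∃ (W : C) (a : W ⟶ Z₁) (b : W ⟶ Z₂), a ≫ p₁ = b ≫ p₂ ∧ a ≫ q₁ = b ≫ q₂

/-- Locally split: each induced slice functor admits a section. -/
def LocallySplit (F : E ⥤ B) : Prop :=
  ∀ X : E, ∃ x : Over (F.obj X) ⥤ Over X, x ⋙ Over.post F = 𝟭 (Over (F.obj X))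

/-- Kumjian-Pask fibration. -/
def IsKPF (F : E ⥤ B) : Prop :=
  IsDCF F ∧ LocallySplit F ∧ StronglyRightOre B

/-- Row-finite functor. -/
def RowFinite (F : E ⥤ B) : Prop :=
  ∀ (X : E) {M : B} (b : M ⟶ F.obj X),
    {p : Σ Y : E, Y ⟶ X | ∃ h : F.obj p.1 = M, F.map p.2 = eqToHom h ≫ b}.Finite

/-- Strongly surjective functor. -/
def StronglySurjective (F : E ⥤ B) : Prop :=
  Function.Surjective F.obj ∧
    ∀ (X : E) {M : B} (b : M ⟶ F.obj X),
      ∃ (Y : E) (α : Y ⟶ X) (h : F.obj Y = M), F.map α = eqToHom h ≫ b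

/-- An infinite path to `X`: a section of the induced slice functor. -/
structure InfPath (F : E ⥤ B) (X : E) where
  fn : Over (F.obj X) ⥤ Over X
  sec : fn ⋙ Over.post F = 𝟭 (Over (F.obj X))

/-- The infinite path space `F^∞`. -/
def FInf (F : E ⥤ B) := Σ X : E, InfPath F X

/-- `x ∈ Z(μ)` for `x` an infinite path to the target of `μ`. -/
abbrev InPathOf {F : E ⥤ B} {Y X : E} (μ : Y ⟶ X) (x : InfPath F X) : Prop :=
  x.fn.obj (Over.mk (F.map μ)) = Over.mk μ

/-- `Z(X) ⊆ F^∞`. -/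
def ZObj (F : E ⥤ B) (X : E) : Set (FInf F) := {p | p.1 = X}

/-- `Z(μ) ⊆ F^∞`. -/
def ZMor (F : E ⥤ B) {Y X : E} (μ : Y ⟶ X) : Set (FInf F) :=
  {p | ∃ h : p.1 = X, InPathOf μ (h ▸ p.2)}

/-- The basic sets `Z(μ)`. -/
def pathBasis (F : E ⥤ B) : Set (Set (FInf F)) :=
  {S | ∃ (Y X : E) (μ : Y ⟶ X), S = ZMor F μ}

/-- The topology on `F^∞` generated by the sets `Z(μ)`. -/
def pathTopology (F : E ⥤ B) : TopologicalSpace (FInf F) :=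
  TopologicalSpace.generateFrom (pathBasis F)

/-- The morphism `(u, g) : (g ≫ u) ⟶ u` of a slice category. -/
def oHomW {T : Type u''} [Category.{v''} T] {X A A' : T} {u : A ⟶ X} {v : A' ⟶ X}
    (g : A' ⟶ A) (w : g ≫ u = v) : Over.mk v ⟶ Over.mk u :=
  Over.homMk g w

/-- The defining relation between `w = res_μ x` and `x = ind_μ w`, on objects:
`x(a ∘ F μ) = μ ∘ w(a)` for all `a`. -/
def IndRel (F : E ⥤ B) {Y X : E} (μ : Y ⟶ X) (w : InfPath F Y) (x : InfPath F X) : Prop :=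
  ∀ {A : B} (a : A ⟶ F.obj Y),
    x.fn.obj (Over.mk (a ≫ F.map μ)) = Over.mk ((w.fn.obj (Over.mk a)).hom ≫ μ)

/-- `w = res_μ x`. -/
def ResRel (F : E ⥤ B) {Y X : E} (μ : Y ⟶ X) (x : InfPath F X) (w : InfPath F Y) : Prop :=
  InPathOf μ x ∧ IndRel F μ w x

/-- `q = ind_μ p`, at the level of `F^∞`. -/
def IndRelP (F : E ⥤ B) {Y X : E} (μ : Y ⟶ X) (pw px : FInf F) : Prop :=
  ∃ (hw : pw.1 = Y) (hx : px.1 = X),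
    InPathOf μ (hx ▸ px.2) ∧ IndRel F μ (hw ▸ pw.2) (hx ▸ px.2)

/-- `pw = res_μ px`, at the level of `F^∞`. -/
def ResRelP (F : E ⥤ B) {Y X : E} (μ : Y ⟶ X) (px pw : FInf F) : Prop :=
  ∃ (hw : pw.1 = Y) (hx : px.1 = X), ResRel F μ (hx ▸ px.2) (hw ▸ pw.2)

/-- `z' = ind_μ (res_ν z)`. -/
def Translates (F : E ⥤ B) {W U V : E} (μ : W ⟶ U) (ν : W ⟶ V)
    (z : InfPath F V) (z' : InfPath F U) : Prop :=
  ∃ w : InfPath F W, ResRel F ν z w ∧ InPathOf μ z' ∧ IndRel F μ w z'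

/-- `q = ind_μ (res_ν p)`, at the level of `F^∞`. -/
def TranslatesP (F : E ⥤ B) {W U V : E} (μ : W ⟶ U) (ν : W ⟶ V)
    (p q : FInf F) : Prop :=
  ∃ (hp : p.1 = V) (hq : q.1 = U), Translates F μ ν (hp ▸ p.2) (hq ▸ q.2)

/-- An element `(μ, ν, x)` of `𝒢_F`. -/
structure PreG (F : E ⥤ B) where
  W : E
  U : E
  V : E
  μ : W ⟶ U
  ν : W ⟶ V
  x : InfPath F V
  mem : InPathOf ν x

/-- The relation `∼` on `𝒢_F`. -/
def GERel (F : E ⥤ B) (g g' : PreG F) : Prop :=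
  (∃ hV : g.V = g'.V, hV ▸ g.x = g'.x) ∧
  (∃ (Λ : E) (lam : Λ ⟶ g.V),
     (⟨g.V, g.x⟩ : FInf F) ∈ ZMor F lam ∧
     ZMor F lam ⊆ ZMor F g.ν ∩ ZMor F g'.ν ∧
     ∀ p ∈ ZMor F lam, ∀ q : FInf F,
       TranslatesP F g.μ g.ν p q ↔ TranslatesP F g'.μ g'.ν p q) ∧
  (∃ (M : B) (a : M ⟶ F.obj g.W) (b : M ⟶ F.obj g'.W),
     MorEq (a ≫ F.map g.μ) (b ≫ F.map g'.μ) ∧ MorEq (a ≫ F.map g.ν) (b ≫ F.map g'.ν))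

/-- The groupoid `G_F` as a quotient set. -/
def GF (F : E ⥤ B) := Quot (GERel F)

/-- `k` is a composite of `g` and `h` in `G_F` (at the level of representatives). -/
def CompRel (F : E ⥤ B) (g h k : PreG F) : Prop :=
  TranslatesP F h.μ h.ν ⟨h.V, h.x⟩ ⟨g.V, g.x⟩ ∧
  ∃ (P : E) (γ : P ⟶ g.W) (η : P ⟶ h.W) (hUV : h.U = g.V),
    γ ≫ g.ν = (η ≫ h.μ) ≫ eqToHom hUV ∧
    InPathOf (γ ≫ g.ν) g.x ∧
    ∃ mem : InPathOf (η ≫ h.ν) h.x,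
      GERel F k ⟨P, g.U, h.V, γ ≫ g.μ, η ≫ h.ν, h.x, mem⟩

/-- The basic set `Z(μ,ν) ⊆ G_F`. -/
def ZPair (F : E ⥤ B) {W U V : E} (μ : W ⟶ U) (ν : W ⟶ V) : Set (GF F) :=
  {g | ∃ (x : InfPath F V) (mem : InPathOf ν x),
        g = Quot.mk (GERel F) ⟨W, U, V, μ, ν, x, mem⟩}

/-- The basic sets `Z(μ,ν)`. -/
def pairBasis (F : E ⥤ B) : Set (Set (GF F)) :=
  {s | ∃ (W U V : E) (μ : W ⟶ U) (ν : W ⟶ V), s = ZPair F μ ν}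

/-- The topology on `G_F`. -/
def gTopology (F : E ⥤ B) : TopologicalSpace (GF F) :=
  TopologicalSpace.generateFrom (pairBasis F)

/-- A subcategory of a category: a class of objects and morphisms closed under
identities and composition. -/
structure Subcat (C : Type u'') [Category.{v''} C] where
  objs : Set C
  homs : ∀ ⦃M N : C⦄, (M ⟶ N) → Prop
  id_mem : ∀ {M : C}, M ∈ objs → homs (𝟙 M)
  comp_mem : ∀ {M N P : C} {f : M ⟶ N} {g : N ⟶ P}, homs f → homs g → homs (f ≫ g)
  src_mem : ∀ {M N : C} {f : M ⟶ N}, homs f → M ∈ objs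
  tgt_mem : ∀ {M N : C} {f : M ⟶ N}, homs f → N ∈ objs

instance Subcat.cat {C : Type u''} [Category.{v''} C] (S : Subcat C) : Category S.objs where
  Hom M N := {f : M.1 ⟶ N.1 // S.homs f}
  id M := ⟨𝟙 M.1, S.id_mem M.2⟩
  comp f g := ⟨f.1 ≫ g.1, S.comp_mem f.2 g.2⟩
  id_comp f := Subtype.ext (Category.id_comp f.1)
  comp_id f := Subtype.ext (Category.comp_id f.1)
  assoc f g h := Subtype.ext (Category.assoc f.1 g.1 h.1)

/-- The inclusion functor of a subcategory. -/
def Subcat.ι {C : Type u''} [Category.{v''} C] (S : Subcat C) : S.objs ⥤ C where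
  obj M := M.1
  map f := f.1

/-- `f` is (up to the identifications of objects) the image of a morphism of `E`. -/
def InImage (F : E ⥤ B) {M N : B} (f : M ⟶ N) : Prop :=
  ∃ (Y X : E) (μ : Y ⟶ X) (hY : F.obj Y = M) (hX : F.obj X = N),
    F.map μ = eqToHom hY ≫ f ≫ eqToHom hX.symm

/-- An aperiodic infinite path. -/
def AperiodicPath (F : E ⥤ B) {X : E} (x : InfPath F X) : Prop :=
  ∀ {Y Y' : E} (α : Y ⟶ X) (β : Y' ⟶ X) (w : FInf F),
    ResRelP F α ⟨X, x⟩ w → ResRelP F β ⟨X, x⟩ w → MorEq α β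

/-- Spans in a category, as a type. -/
def SpanT (C : Type u'') [Category.{v''} C] := Σ (P Q R : C), (P ⟶ Q) × (P ⟶ R)


/-- Pairs of composable elements of `G_F`. -/
def ComposablePairs (F : E ⥤ B) : Set (GF F × GF F) :=
  {p | ∃ g h : PreG F, p.1 = Quot.mk (GERel F) g ∧ p.2 = Quot.mk (GERel F) h ∧
        TranslatesP F h.μ h.ν ⟨h.V, h.x⟩ ⟨g.V, g.x⟩}

/-! ### Slices of a discrete Conduché fibration -/

theorem over_ext {C : Type u''} [Category.{v''} C] {X : C} {o o' : Over X}
    (h : o.left = o'.left) (e : o.hom = eqToHom h ≫ o'.hom) : o = o' := by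
  obtain ⟨l, ⟨⟨⟩⟩, f⟩ := o
  obtain ⟨l', ⟨⟨⟩⟩, f'⟩ := o'
  obtain rfl : l = l' := h
  obtain rfl : f = f' := by simpa using e
  rfl

theorem over_eqToHom_left {C : Type u''} [Category.{v''} C] {X : C} {o o' : Over X}
    (h : o = o') : (eqToHom h).left = eqToHom (congrArg (fun t : Over X => t.left) h) := by
  subst h; rfl

theorem over_hom_eq {C : Type u''} [Category.{v''} C] {X : C} {o o' : Over X}
    (h : o = o') : o.hom = eqToHom (congrArg (fun t : Over X => t.left) h) ≫ o'.hom := by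
  subst h; simp

/-- For a dCf the induced slice functors are discrete opfibrations: existence of lifts. -/
theorem slice_lift {F : E ⥤ B} (hF : IsDCF F) {X : E} (φ : Over X) {b : Over (F.obj X)}
    (g : (Over.post F).obj φ ⟶ b) :
    ∃ (o : Over X) (h : (Over.post F).obj o = b) (k : φ ⟶ o),
      (Over.post F).map k = g ≫ eqToHom h.symm := by
  obtain ⟨L⟩ := (hF φ.hom g.left b.hom (Over.w g).symm).1
  have h : (Over.post F).obj (Over.mk L.rho) = b := over_ext L.obj_eq L.map_rho
  refine ⟨Over.mk L.rho, h, Over.homMk L.lam L.comp_eq, ?_⟩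
  apply Over.OverMorphism.ext
  rw [Over.comp_left, over_eqToHom_left]
  exact L.map_lam

/-- For a dCf the induced slice functors are discrete opfibrations: uniqueness of lifts. -/
theorem slice_lift_unique {F : E ⥤ B} (hF : IsDCF F) {X : E} {φ o o' : Over X}
    (k : φ ⟶ o) (k' : φ ⟶ o') (h : (Over.post F).obj o = (Over.post F).obj o')
    (e : (Over.post F).map k ≫ eqToHom h = (Over.post F).map k') :
    ∃ e : o = o', k ≫ eqToHom e = k' := by
  have hl : F.obj o.left = F.obj o'.left := congrArg (fun t : Over (F.obj X) => t.left) h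
  have hr : F.map o.hom = eqToHom hl ≫ F.map o'.hom := over_hom_eq h
  have he : F.map k.left ≫ eqToHom hl = F.map k'.left := by
    have := congrArg (fun t => t.left) e
    rw [Over.comp_left, over_eqToHom_left] at this
    exact this
  have h1 : F.map φ.hom = F.map k'.left ≫ F.map o'.hom := by
    rw [← F.map_comp, Over.w]
  let L : ConducheLift F φ.hom (F.map k'.left) (F.map o'.hom) :=
    ⟨o.left, k.left, o.hom, Over.w k, hl, by simp [← he], hr⟩
  let L' : ConducheLift F φ.hom (F.map k'.left) (F.map o'.hom) :=
    ⟨o'.left, k'.left, o'.hom, Over.w k', rfl, by simp, by simp⟩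
  have hL : L = L' := (hF φ.hom _ _ h1).2 L L'
  have hm : o.left = o'.left := congrArg ConducheLift.mid hL
  have hrho : o.hom ≍ o'.hom := by
    have : ∀ {M M' : ConducheLift F φ.hom (F.map k'.left) (F.map o'.hom)}, M = M' →
      M.rho ≍ M'.rho := by rintro M _ rfl; rfl
    exact this hL
  have hlam : k.left ≍ k'.left := by
    have : ∀ {M M' : ConducheLift F φ.hom (F.map k'.left) (F.map o'.hom)}, M = M' →
      M.lam ≍ M'.lam := by rintro M _ rfl; rfl
    exact this hL
  clear_value L L'
  obtain ⟨l, ⟨⟨⟩⟩, f⟩ := o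
  obtain ⟨l', ⟨⟨⟩⟩, f'⟩ := o'
  obtain rfl : l = l' := hm
  cases eq_of_heq hrho
  refine ⟨rfl, ?_⟩
  apply Over.OverMorphism.ext
  simpa using eq_of_heq hlam

theorem slice_faithful {F : E ⥤ B} (hF : IsDCF F) {X : E} {φ o : Over X} (k k' : φ ⟶ o)
    (e : (Over.post F).map k = (Over.post F).map k') : k = k' := by
  obtain ⟨_, h⟩ := slice_lift_unique hF k k' rfl ((Category.comp_id _).trans e)
  simpa using h

/-! ### Infinite paths as sets of morphisms -/

theorem InfPath.post_obj {F : E ⥤ B} {X : E} (x : InfPath F X) (b : Over (F.obj X)) :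
    (Over.post F).obj (x.fn.obj b) = b :=
  Functor.congr_obj x.sec b

theorem InfPath.mem_obj {F : E ⥤ B} {X : E} (x : InfPath F X) (b : Over (F.obj X)) :
    InPathOf (x.fn.obj b).hom x :=
  congrArg x.fn.obj (x.post_obj b)

/-- An infinite path contains at most one morphism above each morphism of `B`. -/
theorem mem_unique {F : E ⥤ B} {X Y Y' : E} {x : InfPath F X} {μ : Y ⟶ X} {ν : Y' ⟶ X}
    (hμ : InPathOf μ x) (hν : InPathOf ν x)
    (h : (Over.post F).obj (Over.mk μ) = (Over.post F).obj (Over.mk ν)) :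
    Over.mk μ = Over.mk ν :=
  hμ.symm.trans ((congrArg x.fn.obj h).trans hν)

/-- A morphism of an infinite path extends along every morphism of `B` into its source. -/
theorem mem_refine {F : E ⥤ B} {X Y : E} {x : InfPath F X} {μ : Y ⟶ X}
    (hμ : InPathOf μ x) {M : B} (a : M ⟶ F.obj Y) :
    ∃ (R : E) (τ : R ⟶ Y) (h : F.obj R = M),
      F.map τ = eqToHom h ≫ a ∧ InPathOf (τ ≫ μ) x := by
  let g : Over.mk (a ≫ F.map μ) ⟶ Over.mk (F.map μ) := Over.homMk a rfl
  let k : x.fn.obj (Over.mk (a ≫ F.map μ)) ⟶ Over.mk μ := x.fn.map g ≫ eqToHom hμ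
  refine ⟨_, k.left, congrArg (fun t : Over (F.obj X) => t.left)
    (x.post_obj (Over.mk (a ≫ F.map μ))), ?_, ?_⟩
  · have h1 : (Over.post F).map (x.fn.map g) = _ := Functor.congr_hom x.sec g
    have h2 : (Over.post F).map k = eqToHom (x.post_obj _) ≫ g := by
      simp only [k, Functor.map_comp, h1, eqToHom_map]
      simp only [Functor.id_map, Category.assoc, eqToHom_trans]
      exact congrArg (eqToHom (x.post_obj _) ≫ ·) (Category.comp_id g)
    have h3 := congrArg (fun t => t.left) h2
    replace h3 := h3.trans (Over.comp_left _ _ _ _ _)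
    rw [over_eqToHom_left] at h3
    exact h3
  · have : k.left ≫ μ = (x.fn.obj (Over.mk (a ≫ F.map μ))).hom := Over.w k
    rw [this]
    exact x.mem_obj _

theorem mem_of_comp {F : E ⥤ B} (hF : IsDCF F) {X Y Z : E} {x : InfPath F X} {μ : Y ⟶ X}
    {γ : Z ⟶ Y} (h : InPathOf (γ ≫ μ) x) : InPathOf μ x := by
  let g : Over.mk (F.map (γ ≫ μ)) ⟶ Over.mk (F.map μ) := Over.homMk (F.map γ) (by simp)
  let k : Over.mk (γ ≫ μ) ⟶ x.fn.obj (Over.mk (F.map μ)) := eqToHom h.symm ≫ x.fn.map g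
  let k' : Over.mk (γ ≫ μ) ⟶ Over.mk μ := Over.homMk γ rfl
  have h1 : (Over.post F).map (x.fn.map g) = _ := Functor.congr_hom x.sec g
  obtain ⟨e, -⟩ := slice_lift_unique hF k k' (x.post_obj _) (by
    simp only [k, Functor.map_comp, h1, eqToHom_map, Functor.id_map, Category.assoc,
      eqToHom_trans_assoc]
    exact (Category.id_comp _).trans
      ((congrArg (g ≫ ·) (eqToHom_trans _ _)).trans (Category.comp_id g)))
  exact e

theorem mem_id {F : E ⥤ B} (hF : IsDCF F) {X : E} (x : InfPath F X) : InPathOf (𝟙 X) x := by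
  apply mem_of_comp hF (γ := (x.fn.obj (Over.mk (𝟙 _))).hom)
  rw [Category.comp_id]
  exact x.mem_obj _

theorem mk_eq {X Y Y' : E} {μ : Y ⟶ X} {ν : Y' ⟶ X} (h : Over.mk μ = Over.mk ν) :
    ∃ e : Y = Y', μ = eqToHom e ≫ ν :=
  ⟨congrArg (fun t : Over X => t.left) h, over_hom_eq h⟩

/-- Two morphisms of an infinite path have a common extension in that path. -/
theorem mem_common {F : E ⥤ B} (hB : RightOre B) {X Y Y' : E} {x : InfPath F X} {μ : Y ⟶ X}
    {ν : Y' ⟶ X} (hμ : InPathOf μ x) (hν : InPathOf ν x) :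
    ∃ (Q : E) (δ : Q ⟶ Y) (τ : Q ⟶ Y'), δ ≫ μ = τ ≫ ν ∧ InPathOf (δ ≫ μ) x := by
  obtain ⟨P, p, q, hpq⟩ := hB (F.map μ) (F.map ν)
  obtain ⟨R, δ, hR, hδ, hδx⟩ := mem_refine hμ p
  obtain ⟨R', τ, hR', hτ, hτx⟩ := mem_refine hν q
  obtain ⟨e, he⟩ := mk_eq (mem_unique hδx hτx (over_ext (hR.trans hR'.symm)
    (show F.map (δ ≫ μ) = eqToHom (hR.trans hR'.symm) ≫ F.map (τ ≫ ν) by simp [hδ, hτ, hpq])))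
  subst e
  exact ⟨R, δ, τ, by simpa using he, hδx⟩

theorem path_ext {F : E ⥤ B} (hF : IsDCF F) {X : E} {x y : InfPath F X}
    (h : ∀ {Y : E} (μ : Y ⟶ X), InPathOf μ x → InPathOf μ y) : x = y := by
  have hobj : ∀ b, x.fn.obj b = y.fn.obj b := fun b => by
    have := h _ (x.mem_obj b)
    exact this.symm.trans (congrArg y.fn.obj (x.post_obj b))
  have hfn : x.fn = y.fn := by
    refine CategoryTheory.Functor.ext hobj fun b b' g => slice_faithful hF _ _ ?_
    have h1 : (Over.post F).map (x.fn.map g) = _ := Functor.congr_hom x.sec g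
    have h2 : (Over.post F).map (y.fn.map g) = _ := Functor.congr_hom y.sec g
    simp only [Functor.map_comp, eqToHom_map, h1, h2]
    simp
  cases x; cases y; cases hfn; rfl

/-- A set of morphisms to `X` with exactly one element above each morphism of `B` to `F X`, and
closed under passing from `γ ≫ μ` to `μ`, is the set of morphisms of an infinite path. -/
theorem exists_path {F : E ⥤ B} (hF : IsDCF F) {X : E} (S : Set (Over X))
    (hex : ∀ b : Over (F.obj X), ∃ o ∈ S, (Over.post F).obj o = b)
    (huniq : ∀ o ∈ S, ∀ o' ∈ S, (Over.post F).obj o = (Over.post F).obj o' → o = o')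
    (hdown : ∀ {o o' : Over X}, (o ⟶ o') → o ∈ S → o' ∈ S) :
    ∃ x : InfPath F X, ∀ {Y : E} (μ : Y ⟶ X), InPathOf μ x ↔ Over.mk μ ∈ S := by
  choose f hfS hf using hex
  have hmap : ∀ (b b' : Over (F.obj X)) (g : b ⟶ b'), ∃ k : f b ⟶ f b',
      (Over.post F).map k = eqToHom (hf b) ≫ g ≫ eqToHom (hf b').symm := by
    intro b b' g
    obtain ⟨o, ho, k, hk⟩ := slice_lift hF (f b) (eqToHom (hf b) ≫ g)
    obtain rfl : o = f b' := huniq _ (hdown k (hfS b)) _ (hfS b') (ho.trans (hf b').symm)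
    exact ⟨k, by simpa using hk⟩
  choose m hm using hmap
  let fn : Over (F.obj X) ⥤ Over X :=
    { obj := f
      map := fun {b b'} g => m b b' g
      map_id := fun b => slice_faithful hF _ _ (by rw [hm, CategoryTheory.Functor.map_id]; simp)
      map_comp := fun g g' => slice_faithful hF _ _ (by
        rw [Functor.map_comp, hm, hm, hm]; simp) }
  refine ⟨⟨fn, CategoryTheory.Functor.ext hf fun b b' g => hm b b' g⟩, fun {Y} μ => ?_⟩
  constructor
  · intro h
    have h' : f (Over.mk (F.map μ)) = Over.mk μ := h
    rw [← h']
    exact hfS _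
  · intro h
    exact huniq _ (hfS _) _ h (hf _)

/-! ### Restriction and induction -/

theorem indRel_iff {F : E ⥤ B} {Y X : E} {μ : Y ⟶ X} {w : InfPath F Y} {x : InfPath F X} :
    IndRel F μ w x ↔ ∀ {Z : E} (γ : Z ⟶ Y), InPathOf γ w → InPathOf (γ ≫ μ) x := by
  constructor
  · intro h Z γ hγ
    have h1 := h (F.map γ)
    rw [hγ] at h1
    rw [InPathOf, F.map_comp]
    exact h1
  · intro h A a
    have h1 := h _ (w.mem_obj (Over.mk a))
    rw [InPathOf, F.map_comp] at h1
    rw [← h1]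
    exact congrArg (fun o : Over (F.obj Y) => x.fn.obj (Over.mk (o.hom ≫ F.map μ)))
      (w.post_obj (Over.mk a)).symm

/-- Morphisms above the same morphism of `B` with the same composite with `μ` are equal. -/
theorem cancel_of_dcf {F : E ⥤ B} (hF : IsDCF F) {X Y Z Z' : E} {μ : Y ⟶ X} {γ : Z ⟶ Y}
    {γ' : Z' ⟶ Y} (h : (Over.post F).obj (Over.mk γ) = (Over.post F).obj (Over.mk γ'))
    (e : Over.mk (γ ≫ μ) = Over.mk (γ' ≫ μ)) : Over.mk γ = Over.mk γ' := by
  obtain ⟨rfl, e⟩ := mk_eq e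
  have e' : γ ≫ μ = γ' ≫ μ := by simpa using e
  have h' : F.map γ = F.map γ' := by
    have h1 : F.map γ = eqToHom rfl ≫ F.map γ' := over_hom_eq h
    simpa using h1
  have := slice_faithful hF (φ := Over.mk (γ ≫ μ)) (o := Over.mk μ)
    (Over.homMk γ rfl) (Over.homMk γ' e'.symm) (Over.OverMorphism.ext h')
  rw [show γ = γ' from congrArg (fun t => t.left) this]

theorem mem_of_indRel {F : E ⥤ B} (hF : IsDCF F) {X Y Z : E} {μ : Y ⟶ X} {w : InfPath F Y}
    {x : InfPath F X} (h : IndRel F μ w x) {γ : Z ⟶ Y} (hγ : InPathOf (γ ≫ μ) x) :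
    InPathOf γ w := by
  have h1 := w.mem_obj (Over.mk (F.map γ))
  have h2 := indRel_iff.1 h _ h1
  have h3 := w.post_obj (Over.mk (F.map γ))
  exact cancel_of_dcf hF h3 (mem_unique h2 hγ (by
    simp only [Over.post_obj, Over.mk_hom, Functor.map_comp]
    exact congrArg (fun o : Over (F.obj Y) => Over.mk (o.hom ≫ F.map μ)) h3))

theorem exists_res {F : E ⥤ B} (hF : IsDCF F) {X Y : E} {μ : Y ⟶ X} {x : InfPath F X}
    (hμ : InPathOf μ x) : ∃ w : InfPath F Y, IndRel F μ w x := by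
  obtain ⟨w, hw⟩ := exists_path hF {o : Over Y | InPathOf (o.hom ≫ μ) x} (by
      intro b
      obtain ⟨R, τ, h, hτ, hx⟩ := mem_refine hμ b.hom
      exact ⟨Over.mk τ, hx, over_ext h hτ⟩) (by
      intro o ho o' ho' h
      refine cancel_of_dcf hF (μ := μ) h (mem_unique ho ho' ?_)
      simp only [Over.post_obj, Over.mk_hom, Functor.map_comp]
      exact congrArg (fun o : Over (F.obj Y) => Over.mk (o.hom ≫ F.map μ)) h) (by
      intro o o' k ho
      refine mem_of_comp hF (γ := k.left) ?_
      rw [← Category.assoc, Over.w]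
      exact ho)
  exact ⟨w, indRel_iff.2 fun γ hγ => (hw γ).1 hγ⟩

/-- Every infinite path `w` to the source of `β` extends along `β`. The morphisms of the
extension are those `φ` with `δ ≫ φ = γ ≫ β` for some `δ` and some `γ` in `w`; the Ore condition
gives one above each morphism of `B`, and the strong Ore condition gives its uniqueness. -/
theorem exists_ind {F : E ⥤ B} (hF : IsDCF F) (hB : StronglyRightOre B) {X Y : E} (β : Y ⟶ X)
    (w : InfPath F Y) : ∃ x : InfPath F X, IndRel F β w x := by
  obtain ⟨x, hx⟩ := exists_path hF {φ : Over X | ∃ (Q : E) (δ : Q ⟶ φ.left) (γ : Q ⟶ Y),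
      δ ≫ φ.hom = γ ≫ β ∧ InPathOf γ w} (by
      intro b
      obtain ⟨P, c, d, hcd⟩ := hB.1 (F.map β) b.hom
      obtain ⟨R, γ, h, hγ, hw⟩ := mem_refine (mem_id hF w) c
      rw [Category.comp_id] at hw
      obtain ⟨o, ho, k, -⟩ := slice_lift hF (Over.mk (γ ≫ β)) (b := b)
        (Over.homMk (eqToHom h ≫ d)
          (show (eqToHom h ≫ d) ≫ b.hom = F.map (γ ≫ β) by simp [hγ, hcd]))
      exact ⟨o, ⟨R, k.left, γ, Over.w k, hw⟩, ho⟩) (by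
      rintro φ ⟨Q, δ, γ, hδ, hγ⟩ φ' ⟨Q', δ', γ', hδ', hγ'⟩ hb
      have hl : F.obj φ'.left = F.obj φ.left :=
        (congrArg (fun t : Over (F.obj X) => t.left) hb).symm
      have hr : F.map φ'.hom = eqToHom hl ≫ F.map φ.hom := over_hom_eq hb.symm
      obtain ⟨M, a, a', h1, h2⟩ := hB.2 (F.map β) (F.map φ.hom) (F.map γ) (F.map δ)
        (F.map γ') (F.map δ' ≫ eqToHom hl) (by rw [← F.map_comp, ← F.map_comp, hδ])
        (by rw [Category.assoc, ← hr, ← F.map_comp, ← F.map_comp, hδ'])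
      obtain ⟨R, τ, hR, hτ, hτw⟩ := mem_refine hγ a
      obtain ⟨R', τ', hR', hτ', hτw'⟩ := mem_refine hγ' a'
      obtain ⟨rfl, he⟩ := mk_eq (mem_unique hτw hτw' (over_ext (hR.trans hR'.symm)
        (show F.map (τ ≫ γ) = eqToHom (hR.trans hR'.symm) ≫ F.map (τ' ≫ γ') by
          simp [hτ, hτ', h1])))
      subst hR
      have he' : τ ≫ γ = τ' ≫ γ' := by simpa using he
      have h3 : (τ' ≫ δ') ≫ φ'.hom = (τ ≫ δ) ≫ φ.hom := by
        rw [Category.assoc, Category.assoc, hδ, hδ', ← Category.assoc, ← he', Category.assoc]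
      obtain ⟨e, -⟩ := slice_lift_unique hF (φ := Over.mk ((τ ≫ δ) ≫ φ.hom))
        (Over.homMk (τ ≫ δ) rfl) (Over.homMk (τ' ≫ δ') h3) hb (by
          apply Over.OverMorphism.ext
          have hτ0 : F.map τ = a := by simpa using hτ
          have hτ0' : F.map τ' = a' := by simpa using hτ'
          have h4 : F.map (τ ≫ δ) ≫ eqToHom hl.symm = F.map (τ' ≫ δ') := by
            rw [F.map_comp, F.map_comp, Category.assoc, hτ0, hτ0', ← Category.assoc, h2]
            simp
          rw [Over.comp_left, over_eqToHom_left]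
          exact h4)
      exact e) (by
      rintro o o' k ⟨Q, δ, γ, hδ, hγ⟩
      exact ⟨Q, δ ≫ k.left, γ, by rw [Category.assoc, Over.w, hδ], hγ⟩)
  exact ⟨x, indRel_iff.2 fun γ hγ => (hx _).2 ⟨_, 𝟙 _, γ, by simp, hγ⟩⟩

/-! ### The topology of the path space -/

theorem ZMor_anti {F : E ⥤ B} (hF : IsDCF F) {X Y Z : E} (γ : Z ⟶ Y) (μ : Y ⟶ X) :
    ZMor F (γ ≫ μ) ⊆ ZMor F μ := by
  rintro ⟨X', z⟩ ⟨h, hz⟩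
  dsimp at h
  subst h
  exact ⟨rfl, mem_of_comp hF hz⟩

/-- The sets `Z(β)` form neighbourhood bases. -/
theorem exists_ZMor_subset {F : E ⥤ B} (hF : IsDCF F) (hB : RightOre B) {X : E}
    (x : InfPath F X) (f : Set (Set (FInf F))) (hf : f.Finite) (hfb : f ⊆ pathBasis F)
    (hx : (⟨X, x⟩ : FInf F) ∈ ⋂₀ f) :
    ∃ (Y : E) (β : Y ⟶ X), InPathOf β x ∧ ZMor F β ⊆ ⋂₀ f := by
  induction f, hf using Set.Finite.induction_on with
  | empty => exact ⟨X, 𝟙 X, mem_id hF x, by simp⟩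
  | insert _ _ ih =>
    rename_i s t _ _
    rw [Set.sInter_insert] at hx ⊢
    obtain ⟨Y, β, hβ, hβs⟩ := ih ((Set.subset_insert _ _).trans hfb) hx.2
    obtain ⟨Y', X', μ, rfl⟩ := hfb (Set.mem_insert _ _)
    obtain ⟨h, hμ⟩ := hx.1
    dsimp at h
    subst h
    obtain ⟨Q, δ, τ, h, hQ⟩ := mem_common hB hβ hμ
    refine ⟨Q, δ ≫ β, hQ, Set.subset_inter ?_ ((ZMor_anti hF _ _).trans hβs)⟩
    rw [h]
    exact ZMor_anti hF _ _

/-! ### Isotropy -/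

/-- A path induced from an aperiodic one is eventually aperiodic: if `res_μ x = res_ν x`, then
`μ` and `ν` agree after composition with some morphism. -/
theorem exists_equalizer {F : E ⥤ B} (hF : IsDCF F) (hB : RightOre B) {X Y W : E} {β : Y ⟶ X}
    {y : InfPath F Y} (hy : AperiodicPath F y) {x : InfPath F X} (hyx : IndRel F β y x)
    {μ ν : W ⟶ X} {w : InfPath F W} (hμ : IndRel F μ w x) (hν : IndRel F ν w x) :
    ∃ (P : E) (κ : P ⟶ W), InPathOf κ w ∧ κ ≫ μ = κ ≫ ν := by
  have hβx : InPathOf β x := mem_of_comp hF (indRel_iff.1 hyx _ (mem_id hF y))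
  have hμx : InPathOf μ x := mem_of_comp hF (indRel_iff.1 hμ _ (mem_id hF w))
  have hνx : InPathOf ν x := mem_of_comp hF (indRel_iff.1 hν _ (mem_id hF w))
  obtain ⟨Q, δ, τ, h1, h1x⟩ := mem_common hB hμx hβx
  obtain ⟨Q', δ', τ', h2, h2x⟩ := mem_common hB hνx hβx
  obtain ⟨P, σ, σ', h3, h3w⟩ := mem_common hB (mem_of_indRel hF hμ h1x) (mem_of_indRel hF hν h2x)
  have e1 : (σ ≫ τ) ≫ β = (σ ≫ δ) ≫ μ := by simp [h1]
  have e2 : (σ' ≫ τ') ≫ β = (σ ≫ δ) ≫ ν := by rw [h3]; simp [h2]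
  obtain ⟨v, hv⟩ := exists_res hF h3w
  -- The paths `res_{σ ≫ τ} y` and `res_{σ' ≫ τ'} y` both coincide with `v = res_{σ ≫ δ} w`.
  have key : ∀ (α : P ⟶ Y) (ξ : W ⟶ X), IndRel F ξ w x → α ≫ β = (σ ≫ δ) ≫ ξ →
      ResRelP F α ⟨Y, y⟩ ⟨P, v⟩ := by
    intro α ξ hξ e
    have hi : IndRel F α v y := by
      refine indRel_iff.2 fun θ hθ => mem_of_indRel hF hyx ?_
      have := indRel_iff.1 hξ _ (indRel_iff.1 hv θ hθ)
      simpa [e] using this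
    exact ⟨rfl, rfl, mem_of_comp hF (indRel_iff.1 hi _ (mem_id hF v)), hi⟩
  obtain ⟨_, _, h⟩ := hy _ _ ⟨P, v⟩ (key _ μ hμ e1) (key _ ν hν e2)
  have h' : σ ≫ τ = σ' ≫ τ' := by simpa using h
  exact ⟨P, σ ≫ δ, h3w, by rw [← e1, ← e2, h']⟩

/-- If `γ ≫ μ = γ ≫ ν`, then `ind_μ ∘ res_ν` is the identity on `Z(γ ≫ ν)`. -/
theorem translates_iff {F : E ⥤ B} (hF : IsDCF F) (hB : RightOre B) {X W P : E} {μ ν : W ⟶ X}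
    {γ : P ⟶ W} (hγ : γ ≫ μ = γ ≫ ν) {z z' : InfPath F X} (hz : InPathOf (γ ≫ ν) z) :
    Translates F μ ν z z' ↔ z = z' := by
  constructor
  · rintro ⟨w, ⟨_, hν⟩, _, hμ⟩
    refine path_ext hF fun φ hφ => ?_
    obtain ⟨Q, δ, τ, h, hQ⟩ := mem_common hB hφ hz
    rw [h, ← Category.assoc] at hQ
    have h1 := indRel_iff.1 hμ _ (mem_of_indRel hF hν hQ)
    rw [Category.assoc, hγ, ← h] at h1
    exact mem_of_comp hF h1
  · rintro rfl
    obtain ⟨w, hw⟩ := exists_res hF (mem_of_comp hF hz)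
    refine ⟨w, ⟨mem_of_comp hF hz, hw⟩, mem_of_comp hF (hγ ▸ hz), indRel_iff.2 fun κ hκ => ?_⟩
    obtain ⟨Q, δ, τ, h, hQ⟩ := mem_common hB hκ (mem_of_indRel hF hw hz)
    have h1 := indRel_iff.1 hw _ hQ
    rw [h, Category.assoc, ← hγ, ← Category.assoc, ← h, Category.assoc] at h1
    exact mem_of_comp hF h1

theorem translatesP_iff {F : E ⥤ B} (hF : IsDCF F) (hB : RightOre B) {X W P : E} {μ ν : W ⟶ X}
    {γ : P ⟶ W} (hγ : γ ≫ μ = γ ≫ ν) {p q : FInf F} (hp : p ∈ ZMor F (γ ≫ ν)) :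
    TranslatesP F μ ν p q ↔ p = q := by
  obtain ⟨X', z⟩ := p
  obtain ⟨h, hz⟩ := hp
  dsimp at h
  subst h
  constructor
  · obtain ⟨U, z'⟩ := q
    rintro ⟨_, h', ht⟩
    dsimp at h'
    subst h'
    exact congrArg (fun t => (⟨U, t⟩ : FInf F)) ((translates_iff hF hB hγ hz).1 ht)
  · rintro rfl
    exact ⟨rfl, rfl, (translates_iff hF hB hγ hz).2 rfl⟩

theorem statement_19 (F : E ⥤ B) (hF : IsKPF F) (hrf : RowFinite F)
    (hap : ∀ X : E, ∃ x : InfPath F X, AperiodicPath F x) :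
    letI : TopologicalSpace (FInf F) := pathTopology F
    Dense {p : FInf F |
      ∀ g : PreG F, (⟨g.V, g.x⟩ : FInf F) = p → TranslatesP F g.μ g.ν p p →
        ∀ mem : InPathOf (𝟙 p.1) p.2,
          Quot.mk (GERel F) g =
            Quot.mk (GERel F) ⟨p.1, p.1, p.1, 𝟙 p.1, 𝟙 p.1, p.2, mem⟩} := by
  obtain ⟨hC, -, hB⟩ := hF
  let : TopologicalSpace (FInf F) := pathTopology F
  refine (TopologicalSpace.isTopologicalBasis_of_subbasis (s := pathBasis F) rfl).dense_iff.2 ?_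
  rintro _ ⟨f, ⟨hf, hfb⟩, rfl⟩ ⟨⟨X, x₀⟩, hx₀⟩
  obtain ⟨Y, β, -, hβ⟩ := exists_ZMor_subset hC hB.1 x₀ f hf hfb hx₀
  obtain ⟨y, hy⟩ := hap Y
  obtain ⟨x, hyx⟩ := exists_ind hC hB β y
  have hβx : InPathOf β x := mem_of_comp hC (indRel_iff.1 hyx _ (mem_id hC y))
  refine ⟨⟨X, x⟩, hβ ⟨rfl, hβx⟩, ?_⟩
  rintro ⟨W, U, V, μ, ν, z, hz⟩ hg ⟨hV, hU, w, ⟨hνx, hν⟩, hμx, hμ⟩ mem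
  dsimp at hV hU
  subst hV hU
  cases hg
  obtain ⟨P, κ, hκ, e⟩ := exists_equalizer hC hB.1 hy hyx hμ hν
  refine Quot.sound ⟨⟨rfl, rfl⟩, ⟨P, κ ≫ ν, ⟨rfl, indRel_iff.1 hν _ hκ⟩, ?_, ?_⟩, ?_⟩
  · refine Set.subset_inter (ZMor_anti hC _ _) ?_
    have := ZMor_anti hC (κ ≫ ν) (𝟙 X)
    rwa [Category.comp_id] at this
  · intro p hp q
    exact (translatesP_iff hC hB.1 e hp).trans
      (translatesP_iff hC hB.1 (γ := κ ≫ ν) rfl (by rwa [Category.comp_id])).symm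
  · refine ⟨_, F.map κ, F.map (κ ≫ ν), ⟨rfl, rfl, ?_⟩, ⟨rfl, rfl, ?_⟩⟩
    · have e' : F.map κ ≫ F.map μ = F.map κ ≫ F.map ν := by
        rw [← F.map_comp, ← F.map_comp, e]
      simp [e']
    · simp

end DCFpaper
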